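/- Algorithm II versus Algorithm I global rates: assume m ≥ 3, X has full rank m, and w* ∈ Ω is a global maximizer of det M(w) over Ω̄ with all coordinates positive. If r(0) ≥ 2/m, then r(1) ≤ r(0); that is, the global rate of convergence of Algorithm II (the case α = 1) is no worse than that of Algorithm I (the case α = 0). -/

import Mathlib

open Matrix Filter

/-- The information matrix `M(w) = ∑ i, w_i x_i x_iᵀ`. -/
noncomputable def Mmat {n m : ℕ} (x : Fin n → Fin m → ℝ) (w : Fin n → ℝ) :
    Matrix (Fin m) (Fin m) ℝ :=
  ∑ i, w i • Matrix.vecMulVec (x i) (x i)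

/-- The multiplicative update map `T_α(w)_i = w_i (x_iᵀ M(w)⁻¹ x_i − α)/(m − α)`. -/
noncomputable def Talg {n m : ℕ} (x : Fin n → Fin m → ℝ) (α : ℝ) (w : Fin n → ℝ) :
    Fin n → ℝ :=
  fun i => w i * ((x i ⬝ᵥ (Mmat x w)⁻¹ *ᵥ x i) - α) / ((m : ℝ) - α)

/-- The coordinate-sum linear functional on `ℂⁿ`. -/
noncomputable def sumLM (n : ℕ) : (Fin n → ℂ) →ₗ[ℂ] ℂ where
  toFun γ := ∑ i, γ i
  map_add' a b := by simp [Finset.sum_add_distrib]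
  map_smul' c a := by simp [Finset.mul_sum]

/-- The zero-sum subspace `Γ = {γ : ∑ i, γ_i = 0}` (complexified). -/
noncomputable def Gam (n : ℕ) : Submodule ℂ (Fin n → ℂ) := LinearMap.ker (sumLM n)

/-- The global rate of convergence: the spectral radius of the matrix `R`, viewed (after
complexification) as a linear map restricted to the zero-sum subspace `Γ`. -/
noncomputable def globalRate {n : ℕ} (R : Matrix (Fin n) (Fin n) ℝ)
    (h : ∀ γ ∈ Gam n, Matrix.toLin' (R.map (Complex.ofReal : ℝ → ℂ)) γ ∈ Gam n) : ℝ :=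
  sSup ((fun μ : ℂ => ‖μ‖) ''
    spectrum ℂ ((Matrix.toLin' (R.map (Complex.ofReal : ℝ → ℂ))).restrict h))

/-!
At an optimal `w`, the Kiefer–Wolfowitz conditions say `x_iᵀ M(w)⁻¹ x_i = m` for all `i`, and
then `R(α) = 1 - (m - α)⁻¹ A` with `A_ij = w_i (x_iᵀ M(w)⁻¹ x_j)²`. By the Schur product theorem
`A` is a positive diagonal matrix times a positive semidefinite one, and its columns sum to `m`, so
its eigenvalues `r` lie in `[0, m]`. Each `r` with an eigenvector in `Γ` gives the eigenvalue
`1 - r / (m - α)` of `R(α)` on `Γ`. It decreases as `α` grows, so `r(α)` can only increase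
through negative eigenvalues, and these are at least `1 - m / (m - α) = -α / (m - α)`. For `α = 1`
this is `-1 / (m - 1) ≥ -2 / m`, which is where the threshold `2 / m` comes from.
-/

section Eigenvalues

open scoped ComplexOrder MatrixOrder

variable {ι 𝕜 : Type*} [RCLike 𝕜]

theorem posSemidef_map_ofReal [Finite ι] {H : Matrix ι ι ℝ} (hH : H.PosSemidef) :
    (H.map (RCLike.ofReal : ℝ → 𝕜)).PosSemidef := by
  classical
  have := Fintype.ofFinite ι
  obtain ⟨B, rfl⟩ := CStarAlgebra.nonneg_iff_eq_star_mul_self.mp hH.nonneg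
  convert Matrix.posSemidef_conjTranspose_mul_self (B.map (RCLike.ofReal : ℝ → 𝕜))
  ext i j
  simp [Matrix.mul_apply, Matrix.star_eq_conjTranspose]

variable [Fintype ι]

theorem eigenvalue_nonneg_of_posDef_mul_posSemidef {P H : Matrix ι ι 𝕜} (hP : P.PosDef)
    (hH : H.PosSemidef) {v : ι → 𝕜} (hv : v ≠ 0) {μ : 𝕜} (hμ : (P * H) *ᵥ v = μ • v) :
    0 ≤ μ := by
  classical
  have hHv : H *ᵥ v = μ • P⁻¹ *ᵥ v := by
    rw [← Matrix.mulVec_smul, ← hμ, Matrix.mulVec_mulVec,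
      Matrix.nonsing_inv_mul_cancel_left _ _ hP.det_pos.ne'.isUnit]
  have hquad : 0 ≤ μ * (star v ⬝ᵥ P⁻¹ *ᵥ v) := by
    simpa only [hHv, dotProduct_smul, smul_eq_mul] using hH.dotProduct_mulVec_nonneg v
  exact le_of_mul_le_mul_right (by rwa [zero_mul]) (hP.inv.dotProduct_mulVec_pos hv)

theorem norm_eigenvalue_le_of_sum_norm_col_le {K : Type*} [NormedField K] {A : Matrix ι ι K}
    {c : ℝ} (hcol : ∀ j, ∑ i, ‖A i j‖ ≤ c) {v : ι → K} (hv : v ≠ 0) {μ : K}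
    (hμ : A *ᵥ v = μ • v) : ‖μ‖ ≤ c := by
  have hv_pos : 0 < ∑ i, ‖v i‖ := by
    obtain ⟨k, hk⟩ := Function.ne_iff.mp hv
    exact Finset.sum_pos' (fun i _ => norm_nonneg _) ⟨k, Finset.mem_univ k, norm_pos_iff.mpr hk⟩
  refine le_of_mul_le_mul_right ?_ hv_pos
  calc ‖μ‖ * ∑ i, ‖v i‖ = ∑ i, ‖∑ j, A i j * v j‖ := by
        rw [Finset.mul_sum]
        exact Finset.sum_congr rfl fun i _ => by
          rw [← norm_mul]; exact congrArg norm (congrFun hμ i).symm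
    _ ≤ ∑ i, ∑ j, ‖A i j‖ * ‖v j‖ := by
        gcongr with i
        exact (norm_sum_le _ _).trans_eq (by simp only [norm_mul])
    _ = ∑ j, (∑ i, ‖A i j‖) * ‖v j‖ := by
        rw [Finset.sum_comm]
        simp only [Finset.sum_mul]
    _ ≤ ∑ j, c * ‖v j‖ := by
        gcongr with j
        exact hcol j
    _ = c * ∑ j, ‖v j‖ := (Finset.mul_sum ..).symm

theorem eigenvalue_mem_Icc_of_diagonal_mul_posSemidef [DecidableEq ι] {H : Matrix ι ι ℝ}
    (hH : H.PosSemidef) (hH_nonneg : ∀ i j, 0 ≤ H i j) {w : ι → ℝ} (hw : ∀ i, 0 < w i) {c : ℝ}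
    (hcol : ∀ j, ∑ i, w i * H i j ≤ c) {v : ι → ℂ} (hv : v ≠ 0) {μ : ℂ}
    (hμ : (diagonal w * H).map (Complex.ofReal : ℝ → ℂ) *ᵥ v = μ • v) :
    ∃ r ∈ Set.Icc 0 c, (r : ℂ) = μ := by
  have hμ_nonneg : 0 ≤ μ := by
    refine eigenvalue_nonneg_of_posDef_mul_posSemidef
      (P := diagonal fun i => (w i : ℂ)) (H := H.map (Complex.ofReal : ℝ → ℂ))
      (.diagonal fun i => by exact_mod_cast hw i) (posSemidef_map_ofReal hH) hv ?_
    rw [← hμ]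
    congr 1
    ext i j
    simp
  have hμ_norm : ‖μ‖ ≤ c := by
    refine norm_eigenvalue_le_of_sum_norm_col_le (fun j => ?_) hv hμ
    simpa [abs_of_nonneg, hH_nonneg, (hw _).le] using hcol j
  exact ⟨‖μ‖, ⟨norm_nonneg μ, hμ_norm⟩, by exact_mod_cast RCLike.norm_of_nonneg' hμ_nonneg⟩

end Eigenvalues

section RankOneUpdate

variable {ι K : Type*} [Fintype ι] [DecidableEq ι]

theorem det_add_vecMulVec [CommRing K] {M : Matrix ι ι K} (hM : IsUnit M.det) (u v : ι → K) :
    (M + vecMulVec u v).det = M.det * (1 + v ⬝ᵥ M⁻¹ *ᵥ u) := by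
  rw [vecMulVec_eq Unit, det_add_replicateCol_mul_replicateRow hM, det_unique (n := Unit),
    Matrix.mul_assoc, ← replicateCol_mulVec, Matrix.add_apply, one_apply_eq,
    replicateRow_mul_replicateCol_apply]

/-- The Sherman–Morrison formula. -/
theorem inv_add_vecMulVec [Field K] {M : Matrix ι ι K} (hM : IsUnit M.det) (u v : ι → K)
    (h : 1 + v ⬝ᵥ M⁻¹ *ᵥ u ≠ 0) :
    (M + vecMulVec u v)⁻¹ =
      M⁻¹ - (1 + v ⬝ᵥ M⁻¹ *ᵥ u)⁻¹ • vecMulVec (M⁻¹ *ᵥ u) (v ᵥ* M⁻¹) := by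
  refine inv_eq_right_inv ?_
  rw [mul_sub, add_mul, mul_nonsing_inv _ hM, Matrix.mul_smul, add_mul, mul_vecMulVec,
    vecMulVec_mul, vecMulVec_mul_vecMulVec, mulVec_mulVec, mul_nonsing_inv _ hM, one_mulVec]
  ext i j
  simp only [vecMulVec_smul, smul_add, Matrix.sub_apply, Matrix.add_apply, vecMulVec_apply,
    Matrix.smul_apply, smul_eq_mul]
  field_simp
  ring

end RankOneUpdate

section Design

variable {n m : ℕ} {x : Fin n → Fin m → ℝ} {w : Fin n → ℝ}

theorem Mmat_eq_transpose_mul_diagonal_mul (x : Fin n → Fin m → ℝ) (w : Fin n → ℝ) :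
    Mmat x w = (of x)ᵀ * diagonal w * of x := by
  ext a b
  rw [Matrix.mul_apply]
  simp only [Mmat, Matrix.sum_apply, Matrix.smul_apply, vecMulVec_apply, smul_eq_mul,
    mul_diagonal, transpose_apply, of_apply]
  exact Finset.sum_congr rfl fun i _ => by ring

theorem posDef_Mmat (hrank : (of x).rank = m) (hw : ∀ i, 0 < w i) : (Mmat x w).PosDef := by
  have hinj : Function.Injective (of x).mulVec := by
    have hker := LinearMap.finrank_range_add_finrank_ker (of x).mulVecLin
    rw [← Matrix.rank, hrank, Module.finrank_fin_fun, Nat.add_eq_left,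
      Submodule.finrank_eq_zero] at hker
    exact LinearMap.ker_eq_bot.mp hker
  rw [Mmat_eq_transpose_mul_diagonal_mul, ← conjTranspose_eq_transpose_of_trivial]
  exact (PosDef.diagonal hw).conjTranspose_mul_mul_same hinj

theorem Mmat_smul (x : Fin n → Fin m → ℝ) (c : ℝ) (w : Fin n → ℝ) :
    Mmat x (c • w) = c • Mmat x w := by
  simp only [Mmat, Pi.smul_apply, Finset.smul_sum, smul_smul, smul_eq_mul]

theorem Mmat_add_single (x : Fin n → Fin m → ℝ) (w : Fin n → ℝ) (j : Fin n) (t : ℝ) :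
    Mmat x (w + Pi.single j t) = Mmat x w + vecMulVec (t • x j) (x j) := by
  simp only [Mmat, Pi.add_apply, add_smul, Finset.sum_add_distrib]
  congr 1
  rw [Fintype.sum_eq_single j fun i hi => by simp [hi], Pi.single_eq_same, smul_vecMulVec]

/-- The matrix `X M(w)⁻¹ Xᵀ`, with entries `x_iᵀ M(w)⁻¹ x_j`: up to the noise variance, the
covariances of the least squares predictions at the design points. -/
noncomputable def predCov (x : Fin n → Fin m → ℝ) (w : Fin n → ℝ) : Matrix (Fin n) (Fin n) ℝ :=
  of x * (Mmat x w)⁻¹ * (of x)ᵀ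

theorem predCov_apply (x : Fin n → Fin m → ℝ) (w : Fin n → ℝ) (i j : Fin n) :
    predCov x w i j = x i ⬝ᵥ (Mmat x w)⁻¹ *ᵥ x j := by
  rw [predCov, Matrix.mul_assoc]
  rfl

theorem isSymm_predCov (x : Fin n → Fin m → ℝ) (w : Fin n → ℝ) : (predCov x w).IsSymm := by
  have hM : (Mmat x w)ᵀ = Mmat x w := by
    rw [Mmat_eq_transpose_mul_diagonal_mul]
    simp [Matrix.mul_assoc]
  simp [Matrix.IsSymm, predCov, transpose_nonsing_inv, hM, Matrix.mul_assoc]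

theorem posSemidef_predCov (hM : (Mmat x w).PosDef) : (predCov x w).PosSemidef := by
  simpa [predCov] using hM.inv.posSemidef.mul_mul_conjTranspose_same (of x)

theorem predCov_mul_diagonal_mul_predCov (hM : IsUnit (Mmat x w).det) :
    predCov x w * diagonal w * predCov x w = predCov x w := by
  calc predCov x w * diagonal w * predCov x w
      = of x * (Mmat x w)⁻¹ * ((of x)ᵀ * diagonal w * of x) * (Mmat x w)⁻¹ * (of x)ᵀ := by
        simp only [predCov, Matrix.mul_assoc]
    _ = predCov x w := by
        rw [← Mmat_eq_transpose_mul_diagonal_mul, nonsing_inv_mul_cancel_right _ _ hM, predCov]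

theorem sum_mul_predCov_sq (hM : IsUnit (Mmat x w).det) (j : Fin n) :
    ∑ i, w i * predCov x w i j ^ 2 = predCov x w j j := by
  conv_rhs => rw [← predCov_mul_diagonal_mul_predCov hM, Matrix.mul_apply]
  refine Finset.sum_congr rfl fun i _ => ?_
  rw [mul_diagonal, (isSymm_predCov x w).apply]
  ring

theorem det_Mmat_add_single (hM : IsUnit (Mmat x w).det) (j : Fin n) (t : ℝ) :
    (Mmat x (w + Pi.single j t)).det = (Mmat x w).det * (1 + t * predCov x w j j) := by
  rw [Mmat_add_single, det_add_vecMulVec hM, mulVec_smul, dotProduct_smul, smul_eq_mul,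
    predCov_apply]

theorem predCov_add_single_diag (hM : IsUnit (Mmat x w).det) {j : Fin n} {t : ℝ}
    (ht : 1 + t * predCov x w j j ≠ 0) (i : Fin n) :
    predCov x (w + Pi.single j t) i i =
      predCov x w i i - t * predCov x w i j ^ 2 / (1 + t * predCov x w j j) := by
  have hsymm := (isSymm_predCov x w).apply i j
  simp only [predCov_apply] at ht hsymm ⊢
  rw [Mmat_add_single, inv_add_vecMulVec hM]
  · simp only [sub_mulVec, smul_mulVec, vecMulVec_mulVec, mulVec_smul, dotProduct_sub,
      dotProduct_smul, smul_eq_mul, op_smul_eq_smul, ← dotProduct_mulVec, hsymm]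
    ring
  · simpa only [mulVec_smul, dotProduct_smul, smul_eq_mul] using ht

theorem det_Mmat_le_sum_pow_mul
    (hopt : ∀ v : Fin n → ℝ, (∀ i, 0 ≤ v i) → ∑ i, v i = 1 → (Mmat x v).det ≤ (Mmat x w).det)
    {v : Fin n → ℝ} (hv : ∀ i, 0 ≤ v i) (hv_sum : 0 < ∑ i, v i) :
    (Mmat x v).det ≤ (∑ i, v i) ^ m * (Mmat x w).det := by
  set s := ∑ i, v i
  calc (Mmat x v).det = s ^ m * (Mmat x (s⁻¹ • v)).det := by
        rw [Mmat_smul, det_smul, Fintype.card_fin, ← mul_assoc, ← mul_pow,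
          mul_inv_cancel₀ hv_sum.ne', one_pow, one_mul]
    _ ≤ s ^ m * (Mmat x w).det := by
        gcongr
        refine hopt _ (fun i => mul_nonneg (by positivity) (hv i)) ?_
        simp only [Pi.smul_apply, smul_eq_mul, ← Finset.mul_sum]
        exact inv_mul_cancel₀ hv_sum.ne'

/-- The equality part of the Kiefer–Wolfowitz equivalence theorem. -/
theorem predCov_diag_eq_of_det_maximal (hM : (Mmat x w).PosDef) (hpos : ∀ i, 0 < w i)
    (hsum : ∑ i, w i = 1)
    (hopt : ∀ v : Fin n → ℝ, (∀ i, 0 ≤ v i) → ∑ i, v i = 1 → (Mmat x v).det ≤ (Mmat x w).det)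
    (j : Fin n) : predCov x w j j = m := by
  set d := predCov x w j j
  have hmin : IsLocalMin (fun t : ℝ => (1 + t) ^ m - (1 + t * d)) 0 := by
    have hsum_pos : ∀ᶠ t : ℝ in nhds 0, 0 < 1 + t :=
      ContinuousAt.eventually_lt (by fun_prop) (by fun_prop) (by simp)
    have hweight_pos : ∀ᶠ t : ℝ in nhds 0, 0 < w j + t :=
      ContinuousAt.eventually_lt (by fun_prop) (by fun_prop) (by simpa using hpos j)
    filter_upwards [hsum_pos, hweight_pos] with t hsum_t hweight_t
    have hnonneg : ∀ i, 0 ≤ (w + Pi.single j t : Fin n → ℝ) i := by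
      intro i
      obtain rfl | hij := eq_or_ne i j
      · simpa using hweight_t.le
      · simpa [hij] using (hpos i).le
    have hsum_eq : ∑ i, (w + Pi.single j t : Fin n → ℝ) i = 1 + t := by
      simp [Finset.sum_add_distrib, hsum]
    have hdet := det_Mmat_le_sum_pow_mul hopt hnonneg (hsum_eq ▸ hsum_t)
    rw [hsum_eq, det_Mmat_add_single hM.det_pos.ne'.isUnit, mul_comm] at hdet
    simpa using le_of_mul_le_mul_right hdet hM.det_pos
  have hderiv : HasDerivAt (fun t : ℝ => (1 + t) ^ m - (1 + t * d)) (m - d) 0 := by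
    have hid := hasDerivAt_id' (0 : ℝ)
    simpa using ((hid.const_add 1).fun_pow m).fun_sub ((hid.mul_const d).const_add 1)
  exact (sub_eq_zero.mp (hmin.hasDerivAt_eq_zero hderiv)).symm

theorem hasDerivAt_Talg_add_single (hM : IsUnit (Mmat x w).det) (α : ℝ) (i j : Fin n) :
    HasDerivAt (fun t : ℝ => Talg x α (w + Pi.single j t) i)
      (((Pi.single j 1 : Fin n → ℝ) i * (predCov x w i i - α) - w i * predCov x w i j ^ 2) /
        (m - α)) 0 := by
  set K := predCov x w
  have hcov : HasDerivAt (fun t : ℝ => predCov x (w + Pi.single j t) i i) (-K i j ^ 2) 0 := by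
    have hid := hasDerivAt_id' (0 : ℝ)
    have hrational : HasDerivAt (fun t : ℝ => K i i - t * K i j ^ 2 / (1 + t * K j j))
        (-K i j ^ 2) 0 := by
      simpa using ((hid.mul_const (K i j ^ 2)).fun_div
        ((hid.mul_const (K j j)).const_add 1) (by simp)).const_sub (K i i)
    refine hrational.congr_of_eventuallyEq ?_
    have hne : ∀ᶠ t : ℝ in nhds 0, 1 + t * K j j ≠ 0 :=
      ContinuousAt.eventually_ne (by fun_prop) (by simp)
    filter_upwards [hne] with t ht
    exact predCov_add_single_diag hM ht i
  have hweight : HasDerivAt (fun t : ℝ => w i + (Pi.single j t : Fin n → ℝ) i)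
      ((Pi.single j 1 : Fin n → ℝ) i) 0 :=
    (hasDerivAt_pi.mp (hasDerivAt_single j (0 : ℝ)) i).const_add (w i)
  have hTalg : (fun t : ℝ => Talg x α (w + Pi.single j t) i) = fun t : ℝ =>
      (w i + (Pi.single j t : Fin n → ℝ) i) * (predCov x (w + Pi.single j t) i i - α) /
        (m - α) := by
    simp only [Talg, predCov_apply, Pi.add_apply]
  rw [hTalg]
  refine ((hweight.fun_mul (hcov.sub_const α)).div_const ((m : ℝ) - α)).congr_deriv ?_
  simp [K, sub_eq_add_neg]

/-- The matrix with entries `w_i (x_iᵀ M(w)⁻¹ x_j)²`. At an optimal `w` every Jacobian `R(α)` is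
the polynomial `1 - (m - α)⁻¹ A` in this matrix `A`, so its spectrum governs all the rates. -/
noncomputable def weightedSqCov (x : Fin n → Fin m → ℝ) (w : Fin n → ℝ) :
    Matrix (Fin n) (Fin n) ℝ :=
  diagonal w * (predCov x w ⊙ predCov x w)

theorem jacobian_Talg_eq (hM : IsUnit (Mmat x w).det) {α : ℝ} {R : Matrix (Fin n) (Fin n) ℝ}
    (hR : HasFDerivAt (Talg x α) (LinearMap.toContinuousLinearMap (toLin' R)) w) :
    R = ((m : ℝ) - α)⁻¹ •
      (diagonal (fun i => predCov x w i i - α) - weightedSqCov x w) := by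
  ext i j
  have hline : HasDerivAt (fun t : ℝ => w + Pi.single j t) (Pi.single j 1) 0 :=
    (hasDerivAt_single j (0 : ℝ)).const_add w
  have hcol : HasDerivAt (fun t : ℝ => Talg x α (w + Pi.single j t) i) (R i j) 0 := by
    have hR' : HasFDerivAt (Talg x α) (LinearMap.toContinuousLinearMap (toLin' R))
        (w + Pi.single j 0) := by simpa using hR
    simpa using hasDerivAt_pi.mp (hR'.comp_hasDerivAt (0 : ℝ) hline) i
  rw [hcol.unique (hasDerivAt_Talg_add_single hM α i j)]
  obtain rfl | hij := eq_or_ne i j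
  · simp [weightedSqCov, div_eq_inv_mul, sq]
  · simp [weightedSqCov, hij, div_eq_inv_mul, sq]

theorem jacobian_Talg_eq_one_sub (hM : IsUnit (Mmat x w).det) (hdiag : ∀ i, predCov x w i i = m)
    {α : ℝ} (hα : (m : ℝ) - α ≠ 0) {R : Matrix (Fin n) (Fin n) ℝ}
    (hR : HasFDerivAt (Talg x α) (LinearMap.toContinuousLinearMap (toLin' R)) w) :
    R = 1 - ((m : ℝ) - α)⁻¹ • weightedSqCov x w := by
  rw [jacobian_Talg_eq hM hR, smul_sub]
  congr 1
  ext i j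
  simp [diagonal_apply, one_apply, hdiag, hα]

theorem eigenvalue_weightedSqCov_mem_Icc (hM : (Mmat x w).PosDef) (hpos : ∀ i, 0 < w i)
    {c : ℝ} (hdiag : ∀ i, predCov x w i i ≤ c) {γ : Fin n → ℂ} (hγ : γ ≠ 0) {μ : ℂ}
    (hμ : (weightedSqCov x w).map (Complex.ofReal : ℝ → ℂ) *ᵥ γ = μ • γ) :
    ∃ r ∈ Set.Icc 0 c, (r : ℂ) = μ := by
  have hK := posSemidef_predCov hM
  refine eigenvalue_mem_Icc_of_diagonal_mul_posSemidef (hK.hadamard hK)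
    (fun i j => mul_self_nonneg _) hpos (fun j => ?_) hγ hμ
  simpa only [hadamard_apply, ← sq, sum_mul_predCov_sq hM.det_pos.ne'.isUnit] using hdiag j

end Design

section GlobalRate

theorem mem_spectrum_restrict_iff {K V : Type*} [Field K] [AddCommGroup V] [Module K V]
    [FiniteDimensional K V] {f : Module.End K V} {p : Submodule K V} (hp : ∀ v ∈ p, f v ∈ p)
    {μ : K} : μ ∈ spectrum K (f.restrict hp) ↔ ∃ v ∈ p, v ≠ 0 ∧ f v = μ • v := by
  rw [← Module.End.hasEigenvalue_iff_mem_spectrum]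
  constructor
  · intro hμ
    obtain ⟨⟨v, hv⟩, hvec⟩ := hμ.exists_hasEigenvector
    exact ⟨v, hv, fun h => hvec.2 (Subtype.ext h), congrArg Subtype.val hvec.apply_eq_smul⟩
  · rintro ⟨v, hv, hv0, hfv⟩
    exact Module.End.hasEigenvalue_of_hasEigenvector (x := ⟨v, hv⟩)
      ⟨Module.End.mem_eigenspace_iff.mpr (Subtype.ext hfv), fun h => hv0 (congrArg Subtype.val h)⟩

variable {n : ℕ} {A R : Matrix (Fin n) (Fin n) ℝ}

theorem globalRate_nonneg
    (h : ∀ γ ∈ Gam n, toLin' (R.map (Complex.ofReal : ℝ → ℂ)) γ ∈ Gam n) :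
    0 ≤ globalRate R h :=
  Real.sSup_nonneg (by rintro _ ⟨μ, -, rfl⟩; exact norm_nonneg μ)

theorem norm_eigenvalue_le_globalRate
    (h : ∀ γ ∈ Gam n, toLin' (R.map (Complex.ofReal : ℝ → ℂ)) γ ∈ Gam n)
    {γ : Fin n → ℂ} (hγ : γ ∈ Gam n) (hγ0 : γ ≠ 0) {μ : ℂ}
    (hμ : R.map (Complex.ofReal : ℝ → ℂ) *ᵥ γ = μ • γ) : ‖μ‖ ≤ globalRate R h :=
  le_csSup ((Module.End.finite_spectrum _).image _).bddAbove
    ⟨μ, (mem_spectrum_restrict_iff h).mpr ⟨γ, hγ, hγ0, hμ⟩, rfl⟩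

theorem globalRate_le
    (h : ∀ γ ∈ Gam n, toLin' (R.map (Complex.ofReal : ℝ → ℂ)) γ ∈ Gam n) {c : ℝ} (hc : 0 ≤ c)
    (hR : ∀ γ ∈ Gam n, γ ≠ 0 → ∀ μ : ℂ,
      R.map (Complex.ofReal : ℝ → ℂ) *ᵥ γ = μ • γ → ‖μ‖ ≤ c) : globalRate R h ≤ c := by
  refine Real.sSup_le ?_ hc
  rintro _ ⟨μ, hμ, rfl⟩
  obtain ⟨γ, hγ, hγ0, hRγ⟩ := (mem_spectrum_restrict_iff h).mp hμ
  exact hR γ hγ hγ0 μ hRγ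

theorem map_ofReal_one_sub_smul_mulVec (A : Matrix (Fin n) (Fin n) ℝ) (a : ℝ) (γ : Fin n → ℂ) :
    (1 - a • A).map (Complex.ofReal : ℝ → ℂ) *ᵥ γ =
      γ - (a : ℂ) • A.map (Complex.ofReal : ℝ → ℂ) *ᵥ γ := by
  have hmap : (1 - a • A).map (Complex.ofReal : ℝ → ℂ) =
      1 - (a : ℂ) • A.map (Complex.ofReal : ℝ → ℂ) := by
    ext i j
    simp [one_apply, apply_ite (Complex.ofReal : ℝ → ℂ)]
  rw [hmap, sub_mulVec, one_mulVec, smul_mulVec]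

theorem globalRate_one_sub_smul_le_of_le {a b c : ℝ} (hb : 0 < b) (hab : a ≤ b)
    (hA : ∀ γ ∈ Gam n, γ ≠ 0 → ∀ ν : ℂ,
      A.map (Complex.ofReal : ℝ → ℂ) *ᵥ γ = ν • γ → ∃ r ∈ Set.Icc 0 c, (r : ℂ) = ν)
    (ha_map : ∀ γ ∈ Gam n, toLin' ((1 - a • A).map (Complex.ofReal : ℝ → ℂ)) γ ∈ Gam n)
    (hb_map : ∀ γ ∈ Gam n, toLin' ((1 - b • A).map (Complex.ofReal : ℝ → ℂ)) γ ∈ Gam n)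
    (hbig : b * c - 1 ≤ globalRate (1 - a • A) ha_map) :
    globalRate (1 - b • A) hb_map ≤ globalRate (1 - a • A) ha_map := by
  refine globalRate_le hb_map (globalRate_nonneg ha_map) fun γ hγ hγ0 μ hμ => ?_
  have hb0 : (b : ℂ) ≠ 0 := by exact_mod_cast hb.ne'
  have hAγ : A.map (Complex.ofReal : ℝ → ℂ) *ᵥ γ = ((1 - μ) / b) • γ := by
    rw [map_ofReal_one_sub_smul_mulVec, sub_eq_iff_eq_add, ← sub_eq_iff_eq_add'] at hμ
    rw [div_eq_inv_mul, mul_smul, sub_smul, one_smul, hμ, inv_smul_smul₀ hb0]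
  obtain ⟨r, ⟨hr0, hrc⟩, hr⟩ := hA γ hγ hγ0 _ hAγ
  have hμr : μ = ((1 - b * r : ℝ) : ℂ) := by
    push_cast
    rw [hr]
    field_simp
    ring
  have hrate : |1 - a * r| ≤ globalRate (1 - a • A) ha_map := by
    rw [← Real.norm_eq_abs, ← Complex.norm_real]
    refine norm_eigenvalue_le_globalRate ha_map hγ hγ0 ?_
    rw [map_ofReal_one_sub_smul_mulVec, hAγ, ← hr]
    push_cast
    module
  rw [hμr, Complex.norm_real, Real.norm_eq_abs, abs_le']
  constructor
  · calc 1 - b * r ≤ 1 - a * r := by gcongr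
      _ ≤ |1 - a * r| := le_abs_self _
      _ ≤ _ := hrate
  · calc -(1 - b * r) = b * r - 1 := by ring
      _ ≤ b * c - 1 := by gcongr
      _ ≤ _ := hbig

end GlobalRate

theorem stmt_8_general {n m : ℕ} (x : Fin n → Fin m → ℝ) (hrank : (Matrix.of x).rank = m)
    (wstar : Fin n → ℝ) (hpos : ∀ i, 0 < wstar i) (hsum : ∑ i, wstar i = 1)
    (hopt : ∀ v : Fin n → ℝ, (∀ i, 0 ≤ v i) → ∑ i, v i = 1 →
      (Mmat x v).det ≤ (Mmat x wstar).det)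
    {α β : ℝ} (hαβ : α ≤ β) (hβm : β < m) (Rβ Rα : Matrix (Fin n) (Fin n) ℝ)
    (hRβ : HasFDerivAt (Talg x β) (LinearMap.toContinuousLinearMap (toLin' Rβ)) wstar)
    (hRα : HasFDerivAt (Talg x α) (LinearMap.toContinuousLinearMap (toLin' Rα)) wstar)
    (hmapβ : ∀ γ ∈ Gam n, toLin' (Rβ.map (Complex.ofReal : ℝ → ℂ)) γ ∈ Gam n)
    (hmapα : ∀ γ ∈ Gam n, toLin' (Rα.map (Complex.ofReal : ℝ → ℂ)) γ ∈ Gam n)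
    (hbig : β / (m - β) ≤ globalRate Rα hmapα) :
    globalRate Rβ hmapβ ≤ globalRate Rα hmapα := by
  have hM := posDef_Mmat hrank hpos
  have hdet := hM.det_pos.ne'.isUnit
  have hdiag := predCov_diag_eq_of_det_maximal hM hpos hsum hopt
  have hβ : 0 < (m : ℝ) - β := sub_pos.mpr hβm
  have hα : 0 < (m : ℝ) - α := sub_pos.mpr (hαβ.trans_lt hβm)
  have hthreshold : ((m : ℝ) - β)⁻¹ * m - 1 = β / (m - β) := by
    field_simp
    ring
  obtain rfl := jacobian_Talg_eq_one_sub hdet hdiag hα.ne' hRα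
  obtain rfl := jacobian_Talg_eq_one_sub hdet hdiag hβ.ne' hRβ
  exact globalRate_one_sub_smul_le_of_le (inv_pos.mpr hβ) (by gcongr)
    (fun γ _ hγ ν hν => eigenvalue_weightedSqCov_mem_Icc hM hpos (fun i => (hdiag i).le) hγ hν)
    hmapα hmapβ (hthreshold.trans_le hbig)

/-- Algorithm II versus Algorithm I global rates: if `m ≥ 3`, the design matrix has full
rank `m`, `w*` is an interior global maximizer, and `r(0) ≥ 2/m`, then `r(1) ≤ r(0)`: the
global rate of Algorithm II (`α = 1`) is no worse than that of Algorithm I (`α = 0`). -/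
theorem stmt_8 {n m : ℕ} (hm : 3 ≤ m) (hnm : m ≤ n)
    (x : Fin n → Fin m → ℝ) (hrank : (Matrix.of x).rank = m)
    (wstar : Fin n → ℝ) (hpos : ∀ i, 0 < wstar i) (hsum : ∑ i, wstar i = 1)
    (hopt : ∀ v : Fin n → ℝ, (∀ i, 0 ≤ v i) → ∑ i, v i = 1 →
      (Mmat x v).det ≤ (Mmat x wstar).det)
    (R1 R0 : Matrix (Fin n) (Fin n) ℝ)
    (hR1 : HasFDerivAt (Talg x 1)
      (LinearMap.toContinuousLinearMap (Matrix.toLin' R1)) wstar)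
    (hR0 : HasFDerivAt (Talg x 0)
      (LinearMap.toContinuousLinearMap (Matrix.toLin' R0)) wstar)
    (hmap1 : ∀ γ ∈ Gam n, Matrix.toLin' (R1.map (Complex.ofReal : ℝ → ℂ)) γ ∈ Gam n)
    (hmap0 : ∀ γ ∈ Gam n, Matrix.toLin' (R0.map (Complex.ofReal : ℝ → ℂ)) γ ∈ Gam n)
    (hbig : 2 / (m : ℝ) ≤ globalRate R0 hmap0) :
    globalRate R1 hmap1 ≤ globalRate R0 hmap0 := by
  have hm3 : (3 : ℝ) ≤ m := by exact_mod_cast hm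
  have hthreshold : 1 / ((m : ℝ) - 1) ≤ 2 / m := by
    rw [div_le_div_iff₀ (by linarith) (by linarith)]
    linarith
  exact stmt_8_general x hrank wstar hpos hsum hopt zero_le_one (by linarith) R1 R0 hR1 hR0
    hmap1 hmap0 (hthreshold.trans hbig)
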